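/- Let n be odd, let ω be a primitive n-th root of unity in a field F, and let e_0, …, e_{n−1} ∈ F^n be the rows of the Fourier matrix. Let r = 2t be even with 0 < r < n, and let C be the F-linear span of the r rows e_1, e_3, …, e_{r−1}, e_{n−r+1}, e_{n−r+3}, …, e_{n−1} (i.e. e_j and e_{n−j} for each odd j with 1 ≤ j ≤ r−1). Then C is an LCD MDS code of length n, dimension r, and minimum distance n − r + 1. -/

import Mathlib

/-- Hamming weight of a vector: the number of nonzero coordinates. -/
noncomputable def hWeight {F : Type*} [Field F] {n : ℕ} (v : Fin n → F) : ℕ :=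
  open scoped Classical in
  (Finset.univ.filter fun m => v m ≠ 0).card

/-- The dual code of `C` with respect to the standard bilinear form. -/
def dualCode {F : Type*} [Field F] {n : ℕ} (C : Submodule F (Fin n → F)) :
    Submodule F (Fin n → F) where
  carrier := {v | ∀ u ∈ C, ∑ m, u m * v m = 0}
  add_mem' := by
    intro a b ha hb u hu
    have h : ∑ m, u m * (a + b) m = (∑ m, u m * a m) + ∑ m, u m * b m := by
      rw [← Finset.sum_add_distrib]
      exact Finset.sum_congr rfl fun m _ => by simp [mul_add]
    rw [h, ha u hu, hb u hu, add_zero]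
  zero_mem' := by intro u hu; simp
  smul_mem' := by
    intro c a ha u hu
    have h : ∑ m, u m * (c • a) m = c * ∑ m, u m * a m := by
      rw [Finset.mul_sum]
      exact Finset.sum_congr rfl fun m _ => by simp [smul_eq_mul]; ring
    rw [h, ha u hu, mul_zero]

/-- Minimum distance of a code: the least Hamming weight of a nonzero codeword. -/
noncomputable def minDist {F : Type*} [Field F] {n : ℕ} (C : Submodule F (Fin n → F)) : ℕ :=
  sInf {d | ∃ v ∈ C, v ≠ 0 ∧ hWeight v = d}

/-- The `i`-th row of the Fourier matrix built from `ω`: `(e_i)_m = ω^(i·m)`. -/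
def fourierRow {F : Type*} [Field F] (n : ℕ) (ω : F) (i : ZMod n) : Fin n → F :=
  fun m => ω ^ (i.val * m.val)

/-!
The rows of the Fourier matrix multiply like characters, `e_i * e_j = e_{i + j}`. The indices
`±1, ±3, …, ±(r - 1)` form an arithmetic progression of length `r` and step `2`, so `C` consists of
the vectors `e_{1 - r} * p(e_2)` for polynomials `p` of degree less than `r`. As `n` is odd, the
entries of `e_2` are pairwise distinct; hence `C` is a generalized Reed–Solomon code, and such codes
are MDS. For the LCD property, `e_i` is orthogonal to every row except `e_{-i}`, so a vector in the
span of an index set closed under negation is determined by its products with the rows of that set.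
-/

open Finset Polynomial

section GRS

variable {F ι : Type*} [Field F]

/-- The encoding map of generalized Reed–Solomon codes with column multipliers `u` and evaluation
points `x`. It is defined on all polynomials, so that codes of every dimension are images of
submodules under the same map. -/
noncomputable def grsEval (u x : ι → F) : F[X] →ₗ[F] ι → F :=
  LinearMap.pi fun m => u m • leval (x m)

/-- The generalized Reed–Solomon code with column multipliers `u` and evaluation points `x`:
the encodings of the polynomials of degree less than `r`. -/
noncomputable def grsCode (u x : ι → F) (r : ℕ) : Submodule F (ι → F) :=
  (degreeLT F r).map (grsEval u x)

theorem grsEval_apply (u x : ι → F) (p : F[X]) (m : ι) : grsEval u x p m = u m * p.eval (x m) :=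
  rfl

theorem grsEval_X_pow (u x : ι → F) (k : ℕ) : grsEval u x (X ^ k) = u * x ^ k := by
  ext m
  simp [grsEval_apply]

theorem grsCode_eq_span (u x : ι → F) (r : ℕ) :
    grsCode u x r = Submodule.span F ((fun k : ℕ => u * x ^ k) '' Set.Iio r) := by
  classical
  rw [grsCode, degreeLT_eq_span_X_pow, Submodule.map_span, coe_image, coe_range, Set.image_image]
  simp only [grsEval_X_pow]

variable {u x : ι → F}

theorem eq_zero_of_grsEval_eq_zero_on (hu : ∀ m, u m ≠ 0) (hx : Function.Injective x) {p : F[X]}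
    {s : Finset ι} (hp : p ∈ degreeLT F #s) (hs : ∀ m ∈ s, grsEval u x p m = 0) : p = 0 :=
  eq_zero_of_degree_lt_of_eval_index_eq_zero s hx.injOn (mem_degreeLT.1 hp) fun m hm =>
    (mul_eq_zero.1 (hs m hm)).resolve_left (hu m)

theorem grsEval_nodal_eq_zero_iff (hu : ∀ m, u m ≠ 0) (hx : Function.Injective x) (s : Finset ι)
    (m : ι) : grsEval u x (Lagrange.nodal s x) m = 0 ↔ m ∈ s := by
  simp [grsEval_apply, hu, Lagrange.eval_nodal, prod_eq_zero_iff, sub_eq_zero, hx.eq_iff]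

theorem finrank_grsCode [Fintype ι] (hu : ∀ m, u m ≠ 0) (hx : Function.Injective x) {r : ℕ}
    (hr : r ≤ Fintype.card ι) : Module.finrank F (grsCode u x r) = r := by
  have injective_on_degreeLT : Function.Injective ((grsEval u x).domRestrict (degreeLT F r)) := by
    refine (injective_iff_map_eq_zero _).2 fun p hp => Subtype.ext ?_
    exact eq_zero_of_grsEval_eq_zero_on hu hx (s := univ) (degreeLT_mono hr p.2)
      fun m _ => congrFun hp m
  rw [grsCode, ← LinearMap.range_domRestrict, LinearMap.finrank_range_of_inj injective_on_degreeLT,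
    (degreeLTEquiv F r).finrank_eq, Module.finrank_fin_fun]

end GRS

section MinDist

variable {F : Type*} [Field F] {n : ℕ}

theorem hWeight_add_card_zeros [DecidableEq F] (v : Fin n → F) :
    hWeight v + #{m | v m = 0} = n := by
  rw [hWeight, add_comm]
  convert card_filter_add_card_filter_not (s := univ) (fun m => v m = 0)
  exact (card_fin n).symm

theorem minDist_grsCode {u x : Fin n → F} (hu : ∀ m, u m ≠ 0) (hx : Function.Injective x) {r : ℕ}
    (hr0 : 0 < r) (hrn : r ≤ n) : minDist (grsCode u x r) = n - r + 1 := by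
  classical
  refine IsLeast.csInf_eq ⟨?attained, ?lower_bound⟩
  case attained =>
    obtain ⟨s, -, hs⟩ := exists_subset_card_eq (s := (univ : Finset (Fin n))) (n := r - 1)
      (by rw [card_fin]; omega)
    have hweight := hWeight_add_card_zeros (grsEval u x (Lagrange.nodal s x))
    simp only [grsEval_nodal_eq_zero_iff hu hx, filter_univ_mem, hs] at hweight
    have nodal_mem : Lagrange.nodal s x ∈ degreeLT F r := by
      rw [mem_degreeLT, Lagrange.degree_nodal, hs]
      exact_mod_cast Nat.sub_lt hr0 one_pos
    refine ⟨_, Submodule.mem_map_of_mem nodal_mem, fun hzero => ?_, by omega⟩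
    simp only [hzero, hWeight, Pi.zero_apply, ne_eq, not_true_eq_false, filter_false,
      card_empty] at hweight
    omega
  case lower_bound =>
    rintro _ ⟨_, ⟨p, hp, rfl⟩, hne, rfl⟩
    by_contra! hlt
    have hweight := hWeight_add_card_zeros (grsEval u x p)
    have hp0 : p = 0 := eq_zero_of_grsEval_eq_zero_on hu hx
      (s := {m | grsEval u x p m = 0}) (degreeLT_mono (by omega) hp) (by simp)
    exact hne (by rw [hp0, map_zero])

end MinDist

section FourierRow

variable {F : Type*} [Field F] {n : ℕ} [NeZero n] {ω : F}

variable (n) in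
theorem bijective_natCast_fin_zmod : Function.Bijective fun m : Fin n => (m : ZMod n) := by
  refine (Fintype.bijective_iff_injective_and_card _).2 ⟨fun l m hlm => Fin.ext ?_, by simp⟩
  simpa [ZMod.val_natCast, Nat.mod_eq_of_lt] using congrArg ZMod.val hlm

theorem fourierRow_eq_zmodChar (hω : ω ^ n = 1) (i : ZMod n) (m : Fin n) :
    fourierRow n ω i m = AddChar.zmodChar n hω (m * i) := by
  rw [← ZMod.natCast_zmod_val i, ← Nat.cast_mul, AddChar.zmodChar_apply', ZMod.natCast_zmod_val,
    fourierRow, mul_comm]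

theorem fourierRow_add (hω : ω ^ n = 1) (i j : ZMod n) :
    fourierRow n ω (i + j) = fourierRow n ω i * fourierRow n ω j := by
  ext m
  simp only [fourierRow_eq_zmodChar hω, Pi.mul_apply, mul_add, AddChar.map_add_eq_mul]

theorem fourierRow_natCast_mul (hω : ω ^ n = 1) (k : ℕ) (i : ZMod n) :
    fourierRow n ω (k * i) = fourierRow n ω i ^ k := by
  ext m
  simp only [fourierRow_eq_zmodChar hω, Pi.pow_apply, ← AddChar.map_nsmul_eq_pow, nsmul_eq_mul,
    mul_left_comm]

theorem fourierRow_apply_ne_zero (hω : ω ^ n = 1) (i : ZMod n) (m : Fin n) :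
    fourierRow n ω i m ≠ 0 :=
  pow_ne_zero _ (IsUnit.of_pow_eq_one hω (NeZero.ne n)).ne_zero

theorem fourierRow_injective_of_isUnit (hω : IsPrimitiveRoot ω n) {d : ZMod n} (hd : IsUnit d) :
    Function.Injective (fourierRow n ω d) := by
  intro l m hlm
  simp only [fourierRow_eq_zmodChar hω.pow_eq_one, AddChar.zmodChar_apply] at hlm
  have index_eq : (l : ZMod n) * d = m * d :=
    ZMod.val_injective n (hω.pow_inj (ZMod.val_lt _) (ZMod.val_lt _) hlm)
  exact (bijective_natCast_fin_zmod n).injective (hd.mul_right_cancel index_eq)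

theorem span_fourierRow_progression_eq_grsCode (hω : ω ^ n = 1) (a d : ZMod n) (r : ℕ) :
    Submodule.span F (fourierRow n ω '' ((fun k : ℕ => a + k * d) '' Set.Iio r)) =
      grsCode (fourierRow n ω a) (fourierRow n ω d) r := by
  simp only [grsCode_eq_span, Set.image_image, fourierRow_add hω, fourierRow_natCast_mul hω]

theorem fourierRow_dotProduct_fourierRow (hω : IsPrimitiveRoot ω n) (i j : ZMod n) :
    fourierRow n ω i ⬝ᵥ fourierRow n ω j = if i + j = 0 then (n : F) else 0 := by
  let ψ := AddChar.zmodChar n hω.pow_eq_one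
  calc
    fourierRow n ω i ⬝ᵥ fourierRow n ω j = ∑ m : Fin n, ψ (m * (i + j)) := by
      simp only [dotProduct, fourierRow_eq_zmodChar hω.pow_eq_one, mul_add,
        AddChar.map_add_eq_mul, ψ]
    _ = ∑ y : ZMod n, ψ (y * (i + j)) :=
      (bijective_natCast_fin_zmod n).sum_comp fun y => ψ (y * (i + j))
    _ = if i + j = 0 then (n : F) else 0 := by
      rw [AddChar.sum_mulShift _ (AddChar.zmodChar_primitive_of_primitive_root n hω), ZMod.card,
        Nat.cast_ite, Nat.cast_zero]

theorem fourierRow_neg_dotProduct_linearCombination (hω : IsPrimitiveRoot ω n) (c : ZMod n →₀ F)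
    (i : ZMod n) :
    fourierRow n ω (-i) ⬝ᵥ Finsupp.linearCombination F (fourierRow n ω) c = c i * n := by
  rw [Finsupp.linearCombination_apply, Finsupp.sum_fintype _ _ (by simp)]
  simp [dotProduct_sum, fourierRow_dotProduct_fourierRow hω, neg_add_eq_zero]

theorem span_fourierRow_inf_dualCode_eq_bot (hω : IsPrimitiveRoot ω n) {S : Set (ZMod n)}
    (hS : ∀ i ∈ S, -i ∈ S) :
    Submodule.span F (fourierRow n ω '' S) ⊓
      dualCode (Submodule.span F (fourierRow n ω '' S)) = ⊥ := by
  refine eq_bot_iff.2 ?_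
  rintro v ⟨hv, hdual⟩
  obtain ⟨c, hc, rfl⟩ := (Finsupp.mem_span_image_iff_linearCombination F).1 hv
  have hn : (n : F) ≠ 0 := hω.neZero'.ne
  suffices hc0 : c = 0 by simp [hc0]
  ext i
  by_cases hi : i ∈ S
  · have orthogonal := hdual _ (Submodule.subset_span ⟨-i, hS i hi, rfl⟩)
    have hcoeff := fourierRow_neg_dotProduct_linearCombination hω c i
    exact (mul_eq_zero.1 (hcoeff.symm.trans orthogonal)).resolve_right hn
  · exact Finsupp.notMem_support_iff.1 fun hsupp => hi (hc hsupp)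

end FourierRow

theorem setOf_odd_or_neg_odd_eq_progression (R : Type*) [CommRing R] {r : ℕ} (hr : Even r) :
    {i : R | ∃ j : ℕ, Odd j ∧ j ≤ r - 1 ∧ (i = (j : R) ∨ i = -(j : R))} =
      (fun k : ℕ => (1 - r : R) + k * 2) '' Set.Iio r := by
  obtain ⟨t, rfl⟩ := hr
  ext i
  constructor
  · rintro ⟨_, ⟨b, rfl⟩, hj, rfl | rfl⟩
    · exact ⟨t + b, Set.mem_Iio.2 (by omega), by push_cast; ring⟩
    · obtain ⟨k, rfl⟩ := Nat.exists_eq_add_of_lt (show b < t by omega)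
      exact ⟨k, Set.mem_Iio.2 (by omega), by push_cast; ring⟩
  · rintro ⟨k, hk, rfl⟩
    rw [Set.mem_Iio] at hk
    rcases le_or_gt t k with htk | hkt
    · obtain ⟨b, rfl⟩ := Nat.exists_eq_add_of_le htk
      exact ⟨2 * b + 1, odd_two_mul_add_one b, by omega, .inl (by push_cast; ring)⟩
    · obtain ⟨b, rfl⟩ := Nat.exists_eq_add_of_lt hkt
      exact ⟨2 * b + 1, odd_two_mul_add_one b, by omega, .inr (by push_cast; ring)⟩

/-- For odd `n` and even `r = 2t` with `0 < r < n`, the span of the rows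
`e_j` and `e_{n−j}` for each odd `j` with `1 ≤ j ≤ r−1` (i.e. `e_1, e_3, …, e_{r−1},
e_{n−r+1}, e_{n−r+3}, …, e_{n−1}`) is an LCD MDS code of length `n`, dimension `r` and
minimum distance `n − r + 1`. -/
theorem span_odd_rows_LCD_MDS {F : Type*} [Field F] (n : ℕ) [NeZero n] (hn : Odd n) (ω : F)
    (hω1 : ω ^ n = 1) (hωprim : ∀ i : ℕ, 1 ≤ i → i < n → ω ^ i ≠ 1)
    (r : ℕ) (hreven : Even r) (hr0 : 0 < r) (hrn : r < n)
    (C : Submodule F (Fin n → F))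
    (hC : C = Submodule.span F (fourierRow n ω ''
      {i : ZMod n | ∃ j : ℕ, Odd j ∧ j ≤ r - 1 ∧ (i = (j : ZMod n) ∨ i = -(j : ZMod n))})) :
    Module.finrank F C = r ∧ minDist C = n - r + 1 ∧ C ⊓ dualCode C = ⊥ := by
  have hω : IsPrimitiveRoot ω n := .mk_of_lt ω (NeZero.pos n) hω1 hωprim
  have two_isUnit : IsUnit (2 : ZMod n) := by
    exact_mod_cast (ZMod.isUnit_iff_coprime 2 n).2 (Nat.coprime_two_left.2 hn)
  have hmult := fourierRow_apply_ne_zero hω1 (1 - r : ZMod n)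
  have hpoints := fourierRow_injective_of_isUnit hω two_isUnit
  have hgrs : C = grsCode (fourierRow n ω (1 - r)) (fourierRow n ω 2) r := by
    rw [hC, setOf_odd_or_neg_odd_eq_progression (ZMod n) hreven,
      span_fourierRow_progression_eq_grsCode hω1]
  refine ⟨?finrank, ?minDist, ?lcd⟩
  case finrank =>
    rw [hgrs, finrank_grsCode hmult hpoints (by rw [Fintype.card_fin]; exact hrn.le)]
  case minDist =>
    rw [hgrs, minDist_grsCode hmult hpoints hr0 hrn.le]
  case lcd =>
    rw [hC]
    refine span_fourierRow_inf_dualCode_eq_bot hω ?_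
    rintro i ⟨j, hodd, hle, hi | hi⟩
    · exact ⟨j, hodd, hle, .inr (by rw [hi])⟩
    · exact ⟨j, hodd, hle, .inl (by rw [hi, neg_neg])⟩
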